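/- arXiv:quant-ph/0003079 — 2 statements merged into one kernel-verified Lean document; each statement's English description precedes it below -/
import Mathlib

section
/- Fix a real number λ > 0 and let S_λ be the su(1,1)-creation weighted shift on ℓ². Then (S_λ* S_λ − S_λ S_λ*) e₀ = (1/λ) e₀, and for every n ≥ 1, (S_λ* S_λ − S_λ S_λ*) eₙ = ((λ − 1)/((n+λ)(n+λ−1))) eₙ. Consequently, if 0 < λ < 1 then ‖S_λ* e₁‖² − ‖S_λ e₁‖² = (1−λ)/(λ(λ+1)) > 0, so S_λ is not hyponormal and therefore not subnormal. -/
open ContinuousLinearMap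

/-- The Hilbert space `ℓ² = ℓ²(ℕ, ℂ)`. -/
noncomputable abbrev ell2 : Type := lp (fun _ : ℕ => ℂ) 2

/-- The standard orthonormal basis vectors `eₙ` of `ℓ²`. -/
noncomputable def stdBasis (n : ℕ) : ell2 := lp.single 2 n (1 : ℂ)

/-- A normal extension of a bounded operator `S` on a complex inner product space `H`. -/
structure NormalExtension {H : Type} [NormedAddCommGroup H] [InnerProductSpace ℂ H]
    (S : H →L[ℂ] H) : Type 1 where
  K : Type
  [instNACG : NormedAddCommGroup K]
  [instIPS : InnerProductSpace ℂ K]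
  [instCS : CompleteSpace K]
  J : H →ₗᵢ[ℂ] K
  T : K →L[ℂ] K
  normal : adjoint T ∘L T = T ∘L adjoint T
  ext : ∀ φ : H, T (J φ) = J (S φ)

/-- A bounded operator is subnormal if it admits a normal extension. -/
def Subnormal {H : Type} [NormedAddCommGroup H] [InnerProductSpace ℂ H]
    (S : H →L[ℂ] H) : Prop :=
  Nonempty (NormalExtension S)

/-!
The self-commutator `S*S − SS*` of a weighted shift is diagonal, with entries the successive
differences of the squared weights (and `|w₀|²` at `e₀`). For the su(1,1) weights the entry at
`e₁` has the sign of `λ − 1`, and its negative is the defect `‖S* e₁‖² − ‖S e₁‖²` of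
hyponormality. Subnormal operators are hyponormal because normal operators are and because
`S* = J* T* J` whenever `T J = J S` with `J` isometric.
-/

section Hyponormal

variable {𝕜 E F : Type*} [RCLike 𝕜]
  [NormedAddCommGroup E] [InnerProductSpace 𝕜 E] [CompleteSpace E]
  [NormedAddCommGroup F] [InnerProductSpace 𝕜 F] [CompleteSpace F]

/-- Hyponormality of a bounded operator, in the norm form `‖S* φ‖ ≤ ‖S φ‖`, which is equivalent
to `S*S − SS*` being positive semidefinite. -/
def IsHyponormal (S : E →L[𝕜] E) : Prop :=
  ∀ φ : E, ‖adjoint S φ‖ ≤ ‖S φ‖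

theorem IsHyponormal.of_isStarNormal {T : E →L[𝕜] E} (hT : IsStarNormal T) : IsHyponormal T :=
  fun φ => (isStarNormal_iff_norm_eq_adjoint.mp hT φ).ge

theorem norm_adjoint_apply_le_of_isometry (J : E →ₗᵢ[𝕜] F) (y : F) :
    ‖adjoint J.toContinuousLinearMap y‖ ≤ ‖y‖ := by
  have hJ : ‖adjoint J.toContinuousLinearMap‖ ≤ 1 := by
    simpa only [LinearIsometryEquiv.norm_map] using J.norm_toContinuousLinearMap_le
  simpa only [one_mul] using le_of_opNorm_le _ hJ y

theorem adjoint_eq_adjoint_isometry_comp {S : E →L[𝕜] E} {T : F →L[𝕜] F} (J : E →ₗᵢ[𝕜] F)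
    (hTJ : ∀ φ, T (J φ) = J (S φ)) (φ : E) :
    adjoint S φ = adjoint J.toContinuousLinearMap (adjoint T (J φ)) := by
  refine ext_inner_left 𝕜 fun ψ => ?_
  rw [adjoint_inner_right, adjoint_inner_right, adjoint_inner_right,
    LinearIsometry.coe_toContinuousLinearMap, hTJ, J.inner_map_map]

theorem IsHyponormal.of_isometry_intertwining {S : E →L[𝕜] E} {T : F →L[𝕜] F}
    (hT : IsHyponormal T) (J : E →ₗᵢ[𝕜] F) (hTJ : ∀ φ, T (J φ) = J (S φ)) :
    IsHyponormal S := fun φ =>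
  calc ‖adjoint S φ‖ = ‖adjoint J.toContinuousLinearMap (adjoint T (J φ))‖ := by
        rw [adjoint_eq_adjoint_isometry_comp J hTJ]
    _ ≤ ‖adjoint T (J φ)‖ := norm_adjoint_apply_le_of_isometry J _
    _ ≤ ‖T (J φ)‖ := hT (J φ)
    _ = ‖S φ‖ := by rw [hTJ, J.norm_map]

theorem norm_sq_sub_norm_adjoint_sq_of_commutator_apply_eq_smul {S : E →L[𝕜] E} {c : ℝ} {x : E}
    (hx : (adjoint S ∘L S - S ∘L adjoint S) x = (c : 𝕜) • x) :
    ‖S x‖ ^ 2 - ‖adjoint S x‖ ^ 2 = c * ‖x‖ ^ 2 := by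
  have hS : ‖S x‖ ^ 2 = RCLike.re (inner 𝕜 x ((adjoint S ∘L S) x)) :=
    apply_norm_sq_eq_inner_adjoint_right S x
  have hS' : ‖adjoint S x‖ ^ 2 = RCLike.re (inner 𝕜 x ((S ∘L adjoint S) x)) := by
    simpa only [adjoint_adjoint] using apply_norm_sq_eq_inner_adjoint_right (adjoint S) x
  rw [hS, hS', ← map_sub, ← inner_sub_right, ← sub_apply, hx, inner_smul_right,
    RCLike.re_ofReal_mul, inner_self_eq_norm_sq]

end Hyponormal

theorem Subnormal.isHyponormal {H : Type} [NormedAddCommGroup H] [InnerProductSpace ℂ H]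
    [CompleteSpace H] {S : H →L[ℂ] H} (hS : Subnormal S) : IsHyponormal S := by
  obtain ⟨⟨K, J, T, hT, hTJ⟩⟩ := hS
  exact (IsHyponormal.of_isStarNormal ⟨hT⟩).of_isometry_intertwining J hTJ

section WeightedShift

variable {𝕜 E : Type*} [RCLike 𝕜] [NormedAddCommGroup E] [InnerProductSpace 𝕜 E]

/-- `S` is the unilateral weighted shift with weights `w` relative to the Hilbert basis `b`.
It is a predicate on a bounded operator rather than a construction of one from `w`. -/
def IsWeightedShift (b : HilbertBasis ℕ 𝕜 E) (w : ℕ → 𝕜) (S : E →L[𝕜] E) : Prop :=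
  ∀ n, S (b n) = w n • b (n + 1)

namespace IsWeightedShift

variable [CompleteSpace E] {b : HilbertBasis ℕ 𝕜 E} {w : ℕ → 𝕜} {S : E →L[𝕜] E}

theorem inner_adjoint_apply (hS : IsWeightedShift b w S) (i n : ℕ) :
    inner 𝕜 (b i) (adjoint S (b n)) = if i + 1 = n then star (w i) else 0 := by
  rw [adjoint_inner_right, hS, inner_smul_left, orthonormal_iff_ite.mp b.orthonormal, mul_ite,
    mul_one, mul_zero, starRingEnd_apply]

theorem adjoint_apply_zero (hS : IsWeightedShift b w S) : adjoint S (b 0) = 0 := by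
  refine b.repr.injective (lp.ext (funext fun i => ?_))
  rw [b.repr_apply_apply, hS.inner_adjoint_apply, if_neg i.succ_ne_zero, map_zero, lp.coeFn_zero,
    Pi.zero_apply]

theorem adjoint_apply_succ (hS : IsWeightedShift b w S) (n : ℕ) :
    adjoint S (b (n + 1)) = star (w n) • b n := by
  refine b.repr.injective (lp.ext (funext fun i => ?_))
  rw [b.repr_apply_apply, b.repr_apply_apply, hS.inner_adjoint_apply, inner_smul_right,
    orthonormal_iff_ite.mp b.orthonormal]
  rcases eq_or_ne i n with rfl | hin
  · simp
  · simp [hin]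

theorem adjoint_comp_self_apply (hS : IsWeightedShift b w S) (n : ℕ) :
    (adjoint S ∘L S) (b n) = ((‖w n‖ ^ 2 : ℝ) : 𝕜) • b n := by
  rw [comp_apply, hS, map_smul, hS.adjoint_apply_succ, smul_smul, RCLike.star_def,
    RCLike.mul_conj, RCLike.ofReal_pow]

theorem self_comp_adjoint_apply_succ (hS : IsWeightedShift b w S) (n : ℕ) :
    (S ∘L adjoint S) (b (n + 1)) = ((‖w n‖ ^ 2 : ℝ) : 𝕜) • b (n + 1) := by
  rw [comp_apply, hS.adjoint_apply_succ, map_smul, hS, smul_smul, RCLike.star_def,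
    RCLike.conj_mul, RCLike.ofReal_pow]

theorem commutator_apply_zero (hS : IsWeightedShift b w S) :
    (adjoint S ∘L S - S ∘L adjoint S) (b 0) = ((‖w 0‖ ^ 2 : ℝ) : 𝕜) • b 0 := by
  rw [sub_apply, hS.adjoint_comp_self_apply, comp_apply, hS.adjoint_apply_zero, map_zero S,
    sub_zero]

theorem commutator_apply_succ (hS : IsWeightedShift b w S) (n : ℕ) :
    (adjoint S ∘L S - S ∘L adjoint S) (b (n + 1)) =
      ((‖w (n + 1)‖ ^ 2 - ‖w n‖ ^ 2 : ℝ) : 𝕜) • b (n + 1) := by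
  rw [sub_apply, hS.adjoint_comp_self_apply, hS.self_comp_adjoint_apply_succ, ← sub_smul,
    ← RCLike.ofReal_sub]

end IsWeightedShift

end WeightedShift

section SU11

/-- The weights of the su(1,1)-creation operator with parameter `lam`. -/
noncomputable def su11Weight (lam : ℝ) (n : ℕ) : ℝ := Real.sqrt ((n + 1) / (n + lam))

variable {𝕜 E : Type*} [RCLike 𝕜] {lam : ℝ}

theorem norm_sq_su11Weight (hlam : 0 < lam) (n : ℕ) :
    ‖(su11Weight lam n : 𝕜)‖ ^ 2 = (n + 1) / (n + lam) := by
  rw [RCLike.norm_ofReal, sq_abs, su11Weight, Real.sq_sqrt (by positivity)]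

theorem norm_sq_su11Weight_succ_sub (hlam : 0 < lam) (n : ℕ) :
    ‖(su11Weight lam (n + 1) : 𝕜)‖ ^ 2 - ‖(su11Weight lam n : 𝕜)‖ ^ 2 =
      (lam - 1) / ((n + 1 + lam) * (n + lam)) := by
  have hn : (n + lam : ℝ) ≠ 0 := by positivity
  have hn' : (n + 1 + lam : ℝ) ≠ 0 := by positivity
  rw [norm_sq_su11Weight hlam, norm_sq_su11Weight hlam, Nat.cast_succ]
  field_simp
  ring

variable [NormedAddCommGroup E] [InnerProductSpace 𝕜 E] [CompleteSpace E]
  {b : HilbertBasis ℕ 𝕜 E} {S : E →L[𝕜] E}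

theorem su11_commutator_apply_zero (hlam : 0 < lam)
    (hS : IsWeightedShift b (fun n => (su11Weight lam n : 𝕜)) S) :
    (adjoint S ∘L S - S ∘L adjoint S) (b 0) = ((1 / lam : ℝ) : 𝕜) • b 0 := by
  rw [hS.commutator_apply_zero, norm_sq_su11Weight hlam, Nat.cast_zero, zero_add, zero_add]

theorem su11_commutator_apply_succ (hlam : 0 < lam)
    (hS : IsWeightedShift b (fun n => (su11Weight lam n : 𝕜)) S) (n : ℕ) :
    (adjoint S ∘L S - S ∘L adjoint S) (b (n + 1)) =
      (((lam - 1) / ((n + 1 + lam) * (n + lam)) : ℝ) : 𝕜) • b (n + 1) := by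
  rw [hS.commutator_apply_succ, norm_sq_su11Weight_succ_sub hlam]

theorem su11_norm_adjoint_sq_sub_norm_sq (hlam : 0 < lam)
    (hS : IsWeightedShift b (fun n => (su11Weight lam n : 𝕜)) S) (n : ℕ) :
    ‖adjoint S (b (n + 1))‖ ^ 2 - ‖S (b (n + 1))‖ ^ 2 =
      (1 - lam) / ((n + 1 + lam) * (n + lam)) := by
  rw [← neg_sub, norm_sq_sub_norm_adjoint_sq_of_commutator_apply_eq_smul
    (su11_commutator_apply_succ hlam hS n), b.orthonormal.norm_eq_one]
  ring

theorem su11_not_isHyponormal (hlam : 0 < lam) (hlam1 : lam < 1)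
    (hS : IsWeightedShift b (fun n => (su11Weight lam n : 𝕜)) S) : ¬ IsHyponormal S := by
  intro hyp
  have defect_nonpos : ‖adjoint S (b 1)‖ ^ 2 - ‖S (b 1)‖ ^ 2 ≤ 0 :=
    sub_nonpos.mpr (pow_le_pow_left₀ (norm_nonneg _) (hyp (b 1)) 2)
  have defect_pos : 0 < ‖adjoint S (b 1)‖ ^ 2 - ‖S (b 1)‖ ^ 2 := by
    rw [su11_norm_adjoint_sq_sub_norm_sq hlam hS 0]
    exact div_pos (sub_pos.mpr hlam1) (by positivity)
  exact defect_nonpos.not_gt defect_pos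

end SU11

theorem su11_creation_commutator_not_subnormal_general
    {H : Type} [NormedAddCommGroup H] [InnerProductSpace ℂ H] [CompleteSpace H]
    (b : HilbertBasis ℕ ℂ H) (lam : ℝ) (hlam : 0 < lam) (S : H →L[ℂ] H)
    (hS : IsWeightedShift b (fun n => (su11Weight lam n : ℂ)) S) :
    (adjoint S ∘L S - S ∘L adjoint S) (b 0) = ((1 / lam : ℝ) : ℂ) • b 0 ∧
    (∀ n : ℕ, 1 ≤ n → (adjoint S ∘L S - S ∘L adjoint S) (b n) =
      (((lam - 1) / ((n + lam) * (n + lam - 1)) : ℝ) : ℂ) • b n) ∧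
    (lam < 1 →
      ‖adjoint S (b 1)‖ ^ 2 - ‖S (b 1)‖ ^ 2 = (1 - lam) / (lam * (lam + 1)) ∧
      0 < (1 - lam) / (lam * (lam + 1)) ∧
      ¬ IsHyponormal S ∧
      ¬ Subnormal S) := by
  refine ⟨su11_commutator_apply_zero hlam hS, fun n hn => ?_, fun hlam1 => ⟨?_, ?_, ?_, ?_⟩⟩
  · obtain ⟨m, rfl⟩ := Nat.exists_eq_add_of_le' hn
    have hm : ((m + 1 : ℕ) + lam - 1 : ℝ) = m + lam := by
      push_cast
      ring
    rw [hm, Nat.cast_succ]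
    exact su11_commutator_apply_succ hlam hS m
  · simpa only [Nat.cast_zero, zero_add, add_comm 1 lam, mul_comm (lam + 1) lam] using
      su11_norm_adjoint_sq_sub_norm_sq hlam hS 0
  · exact div_pos (sub_pos.mpr hlam1) (by positivity)
  · exact su11_not_isHyponormal hlam hlam1 hS
  · exact fun h => su11_not_isHyponormal hlam hlam1 hS h.isHyponormal

/-- The vectors `stdBasis n`, bundled as a Hilbert basis of `ell2`. -/
noncomputable def stdHilbertBasis : HilbertBasis ℕ ℂ ell2 := ⟨LinearIsometryEquiv.refl ℂ ell2⟩

theorem coe_stdHilbertBasis : ⇑stdHilbertBasis = stdBasis :=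
  funext fun n => (stdHilbertBasis.repr_symm_single n).symm

/-- Fix `λ > 0` and let `S` be the su(1,1)-creation weighted shift on
`ℓ²`, `S eₙ = √((n+1)/(n+λ)) e_{n+1}`.  Then `(S*S − SS*) e₀ = (1/λ) e₀` and, for `n ≥ 1`,
`(S*S − SS*) eₙ = ((λ−1)/((n+λ)(n+λ−1))) eₙ`.  Consequently, if `0 < λ < 1` then
`‖S* e₁‖² − ‖S e₁‖² = (1−λ)/(λ(λ+1)) > 0`, so `S` is not hyponormal and therefore not
subnormal. -/
theorem su11_creation_commutator_not_subnormal
    (lam : ℝ) (hlam : 0 < lam)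
    (S : ell2 →L[ℂ] ell2)
    (hS : ∀ n : ℕ, S (stdBasis n) =
      ((Real.sqrt ((n + 1) / (n + lam)) : ℝ) : ℂ) • stdBasis (n + 1)) :
    (adjoint S ∘L S - S ∘L adjoint S) (stdBasis 0) = ((1 / lam : ℝ) : ℂ) • stdBasis 0 ∧
    (∀ n : ℕ, 1 ≤ n → (adjoint S ∘L S - S ∘L adjoint S) (stdBasis n) =
      (((lam - 1) / ((n + lam) * (n + lam - 1)) : ℝ) : ℂ) • stdBasis n) ∧
    (lam < 1 →
      ‖adjoint S (stdBasis 1)‖ ^ 2 - ‖S (stdBasis 1)‖ ^ 2 = (1 - lam) / (lam * (lam + 1)) ∧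
      0 < (1 - lam) / (lam * (lam + 1)) ∧
      ¬ (∀ φ : ell2, ‖adjoint S φ‖ ≤ ‖S φ‖) ∧
      ¬ Subnormal S) := by
  rw [← coe_stdHilbertBasis] at hS ⊢
  exact su11_creation_commutator_not_subnormal_general stdHilbertBasis lam hlam S hS
end

section
/- For every real number λ ≥ 1, the su(1,1)-creation weighted shift S_λ on ℓ² is subnormal: there exist a complex Hilbert space K, a linear isometry J : ℓ² → K, and a bounded normal operator T on K such that T(Jx) = J(S_λ x) for all x ∈ ℓ². In the case λ = 1, S₁ is the unilateral shift eₙ ↦ e_{n+1}, which is isometric. -/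
open ContinuousLinearMap

/-!
Moment (Berger) criterion: if the `m n = ∫ t ^ n ∂ν` are the moments of a finite measure `ν` on
a bounded interval `[0, C]`, then on `L²` of `ν` times the Haar measure of the circle,
multiplication by `z = √t e^{iθ}` is normal, it shifts the monomials `zⁿ`, and these are pairwise
orthogonal with `‖zⁿ‖² = m n`.  Hence the weighted shift with weights `√(m (n + 1) / m n)` is the
restriction of this operator to the closed span of the monomials.  For `λ > 1` the beta
distribution with parameters `1` and `λ - 1` satisfies `m (n + 1) / m n = (n + 1) / (n + λ)`; for
`λ = 1` the point mass at `1` takes its place.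
-/

section StandardBasis

lemma orthonormal_stdBasis : Orthonormal ℂ stdBasis := by
  let b : HilbertBasis ℕ ℂ ell2 := .ofRepr (.refl ℂ ell2)
  have hb : ⇑b = stdBasis := funext fun n => (b.repr_symm_single n).symm
  exact hb ▸ b.orthonormal

lemma ext_stdBasis {E : Type*} [NormedAddCommGroup E] [NormedSpace ℂ E] {A B : ell2 →L[ℂ] E}
    (h : ∀ n, A (stdBasis n) = B (stdBasis n)) : A = B :=
  lp.ext_continuousLinearMap ENNReal.ofNat_ne_top fun n => by
    ext
    exact h n

variable {K : Type*} [NormedAddCommGroup K] [InnerProductSpace ℂ K] [CompleteSpace K]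

lemma linearIsometry_stdBasis {v : ℕ → K} (hv : Orthonormal ℂ v) (n : ℕ) :
    hv.orthogonalFamily.linearIsometry (stdBasis n) = v n := by
  rw [stdBasis, OrthogonalFamily.linearIsometry_apply_single, LinearIsometry.toSpanSingleton_apply,
    one_smul]

lemma norm_map_of_orthonormal {S : ell2 →L[ℂ] K}
    (hS : Orthonormal ℂ fun n => S (stdBasis n)) (x : ell2) : ‖S x‖ = ‖x‖ := by
  have hSJ : S = hS.orthogonalFamily.linearIsometry.toContinuousLinearMap :=
    ext_stdBasis fun n => (linearIsometry_stdBasis hS n).symm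
  rw [hSJ]
  exact LinearIsometry.norm_map _ x

end StandardBasis

section OrthogonalOrbit

lemma orthonormal_inv_norm_smul {𝕜 E ι : Type*} [RCLike 𝕜] [NormedAddCommGroup E]
    [InnerProductSpace 𝕜 E] {g : ι → E} (hg : ∀ i, g i ≠ 0)
    (horth : Pairwise fun i j => inner 𝕜 (g i) (g j) = 0) :
    Orthonormal 𝕜 fun i => (‖g i‖⁻¹ : 𝕜) • g i := by
  refine ⟨fun i => norm_smul_inv_norm (hg i), fun i j hij => ?_⟩
  simp only [inner_smul_left, inner_smul_right, horth hij, mul_zero]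

theorem subnormal_of_orthogonal_orbit {K : Type} [NormedAddCommGroup K] [InnerProductSpace ℂ K]
    [CompleteSpace K] {T : K →L[ℂ] K} [IsStarNormal T] {g : ℕ → K} (hg : ∀ n, g n ≠ 0)
    (horth : Pairwise fun i j => inner ℂ (g i) (g j) = 0) (hT : ∀ n, T (g n) = g (n + 1))
    {S : ell2 →L[ℂ] ell2}
    (hS : ∀ n, S (stdBasis n) = ((‖g (n + 1)‖ / ‖g n‖ : ℝ) : ℂ) • stdBasis (n + 1)) :
    Subnormal S := by
  have hv : Orthonormal ℂ fun n => (‖g n‖⁻¹ : ℂ) • g n := orthonormal_inv_norm_smul hg horth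
  let J := hv.orthogonalFamily.linearIsometry
  have hTJ : T ∘L J.toContinuousLinearMap = J.toContinuousLinearMap ∘L S := by
    refine ext_stdBasis fun n => ?_
    have hnorm : (‖g (n + 1)‖ : ℂ) ≠ 0 := by simpa using hg (n + 1)
    calc
      T (J (stdBasis n)) = (‖g n‖⁻¹ : ℂ) • g (n + 1) := by
        rw [linearIsometry_stdBasis hv, map_smul, hT]
      _ = ((‖g (n + 1)‖ / ‖g n‖ : ℝ) : ℂ) • (‖g (n + 1)‖⁻¹ : ℂ) • g (n + 1) := by
        rw [smul_smul]
        congr 1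
        push_cast
        field_simp
      _ = J (S (stdBasis n)) := by rw [hS, map_smul, linearIsometry_stdBasis hv]
  exact ⟨{ K, J, T, normal := (star_comm_self (x := T)).eq, ext := DFunLike.congr_fun hTJ }⟩

end OrthogonalOrbit

section MultiplicationOperator

open MeasureTheory
open scoped ENNReal

variable {X 𝕜 : Type*} [MeasurableSpace X] {μ : Measure X} [RCLike 𝕜]

/-- The multiplication operator on `L²(μ)` with symbol `w ∈ L^∞(μ)`. -/
noncomputable def multiplicationOperator (w : Lp 𝕜 ∞ μ) : Lp 𝕜 2 μ →L[𝕜] Lp 𝕜 2 μ :=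
  (ContinuousLinearMap.mul 𝕜 𝕜).holderL μ ∞ 2 2 w

lemma coeFn_multiplicationOperator (w : Lp 𝕜 ∞ μ) (f : Lp 𝕜 2 μ) :
    multiplicationOperator w f =ᵐ[μ] fun x => w x * f x :=
  (ContinuousLinearMap.mul 𝕜 𝕜).coeFn_holder w f

lemma adjoint_multiplicationOperator (w : Lp 𝕜 ∞ μ) :
    adjoint (multiplicationOperator w) = multiplicationOperator (star w) := by
  refine ((eq_adjoint_iff _ _).2 fun f g => ?_).symm
  rw [L2.inner_def, L2.inner_def]
  refine integral_congr_ae ?_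
  filter_upwards [coeFn_multiplicationOperator w g, coeFn_multiplicationOperator (star w) f,
    Lp.coeFn_star w] with x hg hf hw
  simp only [hg, hf, hw, Pi.star_apply, RCLike.inner_apply, map_mul, RCLike.star_def,
    RCLike.conj_conj]
  ring

lemma commute_multiplicationOperator (w₁ w₂ : Lp 𝕜 ∞ μ) :
    Commute (multiplicationOperator w₁) (multiplicationOperator w₂) := by
  rw [commute_iff_eq]
  ext1 f
  refine Lp.ext ?_
  filter_upwards [coeFn_multiplicationOperator w₁ (multiplicationOperator w₂ f),
    coeFn_multiplicationOperator w₂ (multiplicationOperator w₁ f),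
    coeFn_multiplicationOperator w₁ f, coeFn_multiplicationOperator w₂ f] with x h₁₂ h₂₁ h₁ h₂
  simp only [mul_def, comp_apply, h₁₂, h₂₁, h₁, h₂]
  ring

instance isStarNormal_multiplicationOperator (w : Lp 𝕜 ∞ μ) :
    IsStarNormal (multiplicationOperator w) where
  star_comm_self := by
    rw [star_eq_adjoint, adjoint_multiplicationOperator]
    exact commute_multiplicationOperator _ _

end MultiplicationOperator

section MomentCriterion

open MeasureTheory AddCircle
open scoped ENNReal

variable {T : ℝ}

lemma fourier_one_pow (n : ℕ) (x : AddCircle T) : fourier 1 x ^ n = fourier n x := by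
  simp only [fourier_apply, one_zsmul, toCircle_zsmul, zpow_natCast, Circle.coe_pow]

lemma integral_fourier_haarAddCircle [Fact (0 < T)] (n : ℤ) :
    ∫ x, fourier n x ∂haarAddCircle (T := T) = if n = 0 then 1 else 0 := by
  split_ifs with hn
  · simp [hn]
  · exact integral_eq_zero_of_add_right_eq_neg (fourier_add_half_inv_index hn Fact.out)

/-- The complex number `√t e^{2πix/T}` with squared modulus `t` and angle `x`, as a function of
`(t, x)`.  Taking the squared modulus as coordinate turns the `L²` norms of its powers into the
ordinary moments of the law of `t`. -/
noncomputable def sqrtPolar (p : ℝ × AddCircle T) : ℂ := (√p.1 : ℂ) * fourier 1 p.2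

lemma measurable_sqrtPolar : Measurable (sqrtPolar (T := T)) := by
  have hfourier : Measurable (fourier (T := T) 1) := (fourier 1).continuous.measurable
  unfold sqrtPolar
  fun_prop

lemma norm_sqrtPolar (p : ℝ × AddCircle T) : ‖sqrtPolar p‖ = √p.1 := by
  rw [sqrtPolar, norm_mul, fourier_apply, Circle.norm_coe, mul_one, Complex.norm_real,
    Real.norm_of_nonneg (Real.sqrt_nonneg _)]

lemma inner_sqrtPolar_pow (i j : ℕ) (p : ℝ × AddCircle T) :
    inner ℂ (sqrtPolar p ^ i) (sqrtPolar p ^ j) =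
      ((√p.1 ^ (i + j) : ℝ) : ℂ) * fourier (j - i : ℤ) p.2 := by
  simp only [RCLike.inner_apply, sqrtPolar, mul_pow, fourier_one_pow, map_mul, map_pow,
    Complex.conj_ofReal, ← fourier_neg, sub_eq_add_neg, fourier_add]
  push_cast
  ring

variable [Fact (0 < T)] {ν : Measure ℝ}

lemma memLp_sqrtPolar_pow [IsFiniteMeasure ν] {C : ℝ} (hν : ∀ᵐ t ∂ν, t ≤ C) (n : ℕ)
    (q : ℝ≥0∞) : MemLp (fun p => sqrtPolar (T := T) p ^ n) q (ν.prod haarAddCircle) := by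
  refine .of_bound (measurable_sqrtPolar.pow_const n).aestronglyMeasurable (√C ^ n) ?_
  filter_upwards [Measure.quasiMeasurePreserving_fst.ae hν] with p hp
  rw [norm_pow, norm_sqrtPolar]
  gcongr

lemma integral_inner_sqrtPolar_pow [SFinite ν] (hν : ∀ᵐ t ∂ν, 0 ≤ t) (i j : ℕ) :
    ∫ p, inner ℂ (sqrtPolar (T := T) p ^ i) (sqrtPolar p ^ j) ∂ν.prod haarAddCircle =
      if i = j then ((∫ t, t ^ i ∂ν : ℝ) : ℂ) else 0 := by
  simp_rw [inner_sqrtPolar_pow]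
  rw [integral_prod_mul (fun t : ℝ => ((√t ^ (i + j) : ℝ) : ℂ)) (fourier (j - i : ℤ)),
    integral_fourier_haarAddCircle]
  split_ifs with hji hij hij
  · subst hij
    rw [mul_one, integral_complex_ofReal]
    congr 1
    refine integral_congr_ae ?_
    filter_upwards [hν] with t ht
    rw [← two_mul, pow_mul, Real.sq_sqrt ht]
  · omega
  · omega
  · rw [mul_zero]

theorem subnormal_of_moments [IsFiniteMeasure ν] {C : ℝ} (hν : ∀ᵐ t ∂ν, t ∈ Set.Icc 0 C)
    (hpos : ∀ n : ℕ, 0 < ∫ t, t ^ n ∂ν) {S : ell2 →L[ℂ] ell2}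
    (hS : ∀ n : ℕ, S (stdBasis n) =
      ((√((∫ t, t ^ (n + 1) ∂ν) / ∫ t, t ^ n ∂ν) : ℝ) : ℂ) • stdBasis (n + 1)) :
    Subnormal S := by
  have hLp := memLp_sqrtPolar_pow (T := 1) (hν.mono fun _ ht => ht.2)
  let z : Lp ℂ ∞ (ν.prod haarAddCircle) := (hLp 1 ∞).toLp
  let g (n : ℕ) : Lp ℂ 2 (ν.prod haarAddCircle) := (hLp n 2).toLp
  have hinner (i j : ℕ) :
      inner ℂ (g i) (g j) = if i = j then ((∫ t, t ^ i ∂ν : ℝ) : ℂ) else 0 := by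
    rw [L2.inner_def, ← integral_inner_sqrtPolar_pow (T := 1) (hν.mono fun _ ht => ht.1)]
    refine integral_congr_ae ?_
    filter_upwards [(hLp i 2).coeFn_toLp, (hLp j 2).coeFn_toLp] with p hi hj
    rw [hi, hj]
  have hnorm (n : ℕ) : ‖g n‖ = √(∫ t, t ^ n ∂ν) := by
    rw [norm_eq_sqrt_re_inner (𝕜 := ℂ), hinner, if_pos rfl, RCLike.re_to_complex,
      Complex.ofReal_re]
  have hshift (n : ℕ) : multiplicationOperator z (g n) = g (n + 1) := by
    refine Lp.ext ?_
    filter_upwards [coeFn_multiplicationOperator z (g n), (hLp 1 ∞).coeFn_toLp,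
      (hLp n 2).coeFn_toLp, (hLp (n + 1) 2).coeFn_toLp] with p hmul hz hn hsucc
    rw [hmul, hz, hn, hsucc, pow_one, pow_succ']
  refine subnormal_of_orthogonal_orbit (fun n => ?_)
    (fun i j hij => (hinner i j).trans (if_neg hij)) hshift fun n => ?_
  · rw [← norm_ne_zero_iff, hnorm]
    exact (Real.sqrt_pos.2 (hpos n)).ne'
  · rw [hS, hnorm, hnorm, Real.sqrt_div (hpos (n + 1)).le]

end MomentCriterion

section BetaMoments

open MeasureTheory ProbabilityTheory

variable {α β : ℝ}

lemma beta_add_one (hα : α ≠ 0) (hαβ : α + β ≠ 0) :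
    beta (α + 1) β = α / (α + β) * beta α β := by
  rw [beta, beta, add_right_comm, Real.Gamma_add_one hα, Real.Gamma_add_one hαβ]
  field_simp

lemma measurable_betaPDF : Measurable (betaPDF α β) :=
  (measurable_betaPDFReal α β).ennreal_ofReal

lemma betaPDFReal_nonneg (hα : 0 < α) (hβ : 0 < β) (x : ℝ) : 0 ≤ betaPDFReal α β x := by
  by_cases hx : 0 < x ∧ x < 1
  · exact (betaPDFReal_pos hx.1 hx.2 hα hβ).le
  · rw [betaPDFReal, if_neg hx]

lemma integral_betaPDFReal (hα : 0 < α) (hβ : 0 < β) : ∫ x, betaPDFReal α β x = 1 := by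
  rw [integral_eq_lintegral_of_nonneg_ae (.of_forall (betaPDFReal_nonneg hα hβ))
    (measurable_betaPDFReal α β).aestronglyMeasurable]
  exact congrArg ENNReal.toReal (lintegral_betaPDF_eq_one hα hβ)

lemma betaPDFReal_mul_pow (hα : 0 < α) (hβ : 0 < β) (n : ℕ) (x : ℝ) :
    betaPDFReal α β x * x ^ n = beta (α + n) β / beta α β * betaPDFReal (α + n) β x := by
  by_cases hx : 0 < x ∧ x < 1
  · have hbeta : beta (α + n) β ≠ 0 := (beta_pos (by positivity) hβ).ne'
    rw [betaPDFReal, betaPDFReal, if_pos hx, if_pos hx, add_sub_right_comm,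
      Real.rpow_add_natCast hx.1.ne']
    field_simp
  · rw [betaPDFReal, betaPDFReal, if_neg hx, if_neg hx, zero_mul, mul_zero]

lemma ae_betaMeasure_mem_Ioo : ∀ᵐ x ∂betaMeasure α β, x ∈ Set.Ioo 0 1 := by
  rw [betaMeasure, ae_withDensity_iff measurable_betaPDF]
  refine .of_forall fun x hx => ⟨?_, ?_⟩
  · exact not_le.1 fun h => hx (betaPDF_eq_zero_of_nonpos h)
  · exact not_le.1 fun h => hx (betaPDF_eq_zero_of_one_le h)

lemma integral_pow_betaMeasure (hα : 0 < α) (hβ : 0 < β) (n : ℕ) :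
    ∫ x, x ^ n ∂betaMeasure α β = beta (α + n) β / beta α β := by
  calc
    ∫ x, x ^ n ∂betaMeasure α β = ∫ x, betaPDFReal α β x * x ^ n := by
      rw [betaMeasure, integral_withDensity_eq_integral_toReal_smul measurable_betaPDF
        (.of_forall fun _ => ENNReal.ofReal_lt_top)]
      simp only [betaPDF, ENNReal.toReal_ofReal (betaPDFReal_nonneg hα hβ _), smul_eq_mul]
    _ = ∫ x, beta (α + n) β / beta α β * betaPDFReal (α + n) β x := by
      simp only [betaPDFReal_mul_pow hα hβ]
    _ = beta (α + n) β / beta α β := by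
      rw [integral_const_mul, integral_betaPDFReal (by positivity) hβ, mul_one]

lemma integral_pow_betaMeasure_pos (hα : 0 < α) (hβ : 0 < β) (n : ℕ) :
    0 < ∫ x, x ^ n ∂betaMeasure α β := by
  rw [integral_pow_betaMeasure hα hβ]
  exact div_pos (beta_pos (by positivity) hβ) (beta_pos hα hβ)

lemma integral_pow_succ_div_integral_pow_betaMeasure (hα : 0 < α) (hβ : 0 < β) (n : ℕ) :
    (∫ x, x ^ (n + 1) ∂betaMeasure α β) / ∫ x, x ^ n ∂betaMeasure α β =
      (α + n) / (α + n + β) := by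
  have hn : beta (α + n) β ≠ 0 := (beta_pos (by positivity) hβ).ne'
  rw [integral_pow_betaMeasure hα hβ, integral_pow_betaMeasure hα hβ,
    div_div_div_cancel_right₀ (beta_pos hα hβ).ne', Nat.cast_succ, ← add_assoc,
    beta_add_one (by positivity) (by positivity), mul_div_cancel_right₀ _ hn]

end BetaMoments

section WeightedShifts

open MeasureTheory ProbabilityTheory

variable {S : ell2 →L[ℂ] ell2}

theorem norm_map_of_unilateral_shift (hS : ∀ n, S (stdBasis n) = stdBasis (n + 1)) (x : ell2) :
    ‖S x‖ = ‖x‖ := by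
  refine norm_map_of_orthonormal ?_ x
  simp only [hS]
  exact orthonormal_stdBasis.comp _ (add_left_injective 1)

theorem subnormal_of_unilateral_shift (hS : ∀ n, S (stdBasis n) = stdBasis (n + 1)) :
    Subnormal S := by
  refine subnormal_of_moments (ν := Measure.dirac 1) (C := 1) ?_ ?_ ?_
  · simp
  · simp
  · simpa using hS

theorem subnormal_of_beta_weights {α β : ℝ} (hα : 0 < α) (hβ : 0 < β)
    (hS : ∀ n : ℕ, S (stdBasis n) =
      ((√((α + n) / (α + n + β)) : ℝ) : ℂ) • stdBasis (n + 1)) :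
    Subnormal S := by
  have := isProbabilityMeasureBeta hα hβ
  have hsupport : ∀ᵐ x ∂betaMeasure α β, x ∈ Set.Icc 0 1 :=
    ae_betaMeasure_mem_Ioo.mono fun _ hx => Set.Ioo_subset_Icc_self hx
  refine subnormal_of_moments hsupport (integral_pow_betaMeasure_pos hα hβ) fun n => ?_
  rw [hS, integral_pow_succ_div_integral_pow_betaMeasure hα hβ]

end WeightedShifts

/-- For every real `λ ≥ 1`, the su(1,1)-creation weighted shift `S_λ` on
`ℓ²` (with `S_λ eₙ = √((n+1)/(n+λ)) e_{n+1}`) is subnormal.  In the case `λ = 1`, `S₁` is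
the unilateral shift `eₙ ↦ e_{n+1}`, which is isometric. -/
theorem su11_creation_subnormal
    (lam : ℝ) (hlam : 1 ≤ lam)
    (S : ell2 →L[ℂ] ell2)
    (hS : ∀ n : ℕ, S (stdBasis n) =
      ((Real.sqrt ((n + 1) / (n + lam)) : ℝ) : ℂ) • stdBasis (n + 1)) :
    Subnormal S ∧
      (lam = 1 → (∀ n : ℕ, S (stdBasis n) = stdBasis (n + 1)) ∧ ∀ x : ell2, ‖S x‖ = ‖x‖) := by
  have hshift (h : lam = 1) (n : ℕ) : S (stdBasis n) = stdBasis (n + 1) := by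
    have hn : (n : ℝ) + 1 ≠ 0 := by positivity
    rw [hS, h, div_self hn, Real.sqrt_one, Complex.ofReal_one, one_smul]
  refine ⟨?_, fun h => ⟨hshift h, norm_map_of_unilateral_shift (hshift h)⟩⟩
  rcases hlam.eq_or_lt with h | h
  · exact subnormal_of_unilateral_shift (hshift h.symm)
  · refine subnormal_of_beta_weights one_pos (sub_pos.2 h) fun n => ?_
    rw [hS, show (1 : ℝ) + n + (lam - 1) = n + lam by ring, add_comm (1 : ℝ)]
end
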